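/- arXiv:1512.00379 — 2 statements merged into one kernel-verified Lean document; each statement's English description precedes it below -/
import Mathlib

section
/- If α = {a₁, a₂} with a₁ < a₂ is any optimal set of two-means for P, then a₁ = S₁(2/3) = 1/6 and a₂ = S₂(2/3) = 5/6. -/
open MeasureTheory Set
open scoped ENNReal Classical

noncomputable section

/-- The similarity map `S₁(x) = x/4`. -/
def S1 (x : ℝ) : ℝ := x / 4

/-- The similarity map `S₂(x) = x/2 + 1/2`. -/
def S2 (x : ℝ) : ℝ := x / 2 + 1 / 2

/-- `P` satisfies the self-similarity relation `P = (1/4)·P∘S₁⁻¹ + (3/4)·P∘S₂⁻¹`. -/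
def SelfSimilar (P : Measure ℝ) : Prop :=
  P = (1/4 : ℝ≥0∞) • P.map S1 + (3/4 : ℝ≥0∞) • P.map S2

/-- For a word `σ` over `{1,2}` (encoded as `Fin 2`, `0 ↦ S₁`, `1 ↦ S₂`),
the composition `S_σ = S_{σ₁} ∘ ⋯ ∘ S_{σ_k}`. -/
def Sw : List (Fin 2) → ℝ → ℝ
  | [] => id
  | i :: σ => (if i = 0 then S1 else S2) ∘ Sw σ

/-- `p_σ`, the product of the probabilities `p₁ = 1/4`, `p₂ = 3/4` along `σ`. -/
def pw : List (Fin 2) → ℝ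
  | [] => 1
  | i :: σ => (if i = 0 then (1:ℝ)/4 else 3/4) * pw σ

/-- `s_σ`, the product of the contraction ratios `s₁ = 1/4`, `s₂ = 1/2` along `σ`. -/
def sw : List (Fin 2) → ℝ
  | [] => 1
  | i :: σ => (if i = 0 then (1:ℝ)/4 else 1/2) * sw σ

/-- `c(σ)`, the number of occurrences of the symbol `1` (encoded `0`) in `σ`. -/
def cnt (σ : List (Fin 2)) : ℕ := σ.count 0

/-- The cylinder interval `J_σ = S_σ([0,1])`. -/
def J (σ : List (Fin 2)) : Set ℝ := Sw σ '' Set.Icc 0 1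

/-- The distortion error `V(P;α) = ∫ min_{a ∈ α} (x-a)² dP`. -/
def distortion (P : Measure ℝ) (α : Finset ℝ) : ℝ :=
  ∫ x, sInf ((fun a => (x - a) ^ 2) '' (α : Set ℝ)) ∂P

/-- The `n`-th quantization error `V_n`. -/
def qError (P : Measure ℝ) (n : ℕ) : ℝ :=
  sInf {e | ∃ α : Finset ℝ, α.Nonempty ∧ α.card ≤ n ∧ e = distortion P α}

/-- `α` is an optimal set of `n`-means for `P`. -/
def IsOptimal (P : Measure ℝ) (n : ℕ) (α : Finset ℝ) : Prop :=
  α.Nonempty ∧ α.card ≤ n ∧ distortion P α = qError P n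

/-- `q_σ := P(J_σ) · λ(J_σ)²`. -/
def qnt (P : Measure ℝ) (σ : List (Fin 2)) : ℝ :=
  (P (J σ)).toReal * ((volume (J σ)).toReal) ^ 2

lemma SelfSimilar.apply {P : Measure ℝ} (hP : SelfSimilar P) {A : Set ℝ} (hA : MeasurableSet A) :
    P A = (1/4 : ℝ≥0∞) * P (S1 ⁻¹' A) + (3/4 : ℝ≥0∞) * P (S2 ⁻¹' A) := by
  have m1 : Measurable S1 := by unfold S1; fun_prop
  have m2 : Measurable S2 := by unfold S2; fun_prop
  have h := congrArg (fun μ : Measure ℝ => μ A) hP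
  simp only [Measure.add_apply, Measure.smul_apply, smul_eq_mul, Measure.map_apply m1 hA,
    Measure.map_apply m2 hA] at h
  exact h

lemma quarter_add : (1/4 : ℝ≥0∞) + 3/4 = 1 := by
  rw [ENNReal.div_add_div_same]
  norm_num
  exact ENNReal.div_self (by norm_num) (by norm_num)

lemma SelfSimilar.step {P : Measure ℝ} (hP : SelfSimilar P) (r : ℝ) (hr : 0 < r) :
    P {x | x < -r ∨ 1 + r < x} ≤ P {x | x < -(2 * r) ∨ 1 + 2 * r < x} := by
  have hA : MeasurableSet {x : ℝ | x < -r ∨ 1 + r < x} := by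
    exact measurableSet_Iio.union measurableSet_Ioi
  rw [hP.apply hA]
  have h1 : P (S1 ⁻¹' {x | x < -r ∨ 1 + r < x}) ≤ P {x | x < -(2 * r) ∨ 1 + 2 * r < x} := by
    apply measure_mono
    intro x hx
    simp only [S1, mem_preimage, mem_setOf_eq] at hx ⊢
    rcases hx with hx | hx
    · left; linarith
    · right; linarith
  have h2 : P (S2 ⁻¹' {x | x < -r ∨ 1 + r < x}) ≤ P {x | x < -(2 * r) ∨ 1 + 2 * r < x} := by
    apply measure_mono
    intro x hx
    simp only [S2, mem_preimage, mem_setOf_eq] at hx ⊢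
    rcases hx with hx | hx
    · left; linarith
    · right; linarith
  calc _ ≤ (1/4 : ℝ≥0∞) * P {x | x < -(2 * r) ∨ 1 + 2 * r < x}
        + (3/4 : ℝ≥0∞) * P {x | x < -(2 * r) ∨ 1 + 2 * r < x} := by gcongr
    _ = _ := by rw [← add_mul, quarter_add, one_mul]

lemma SelfSimilar.null {P : Measure ℝ} [IsProbabilityMeasure P] (hP : SelfSimilar P)
    (r : ℝ) (hr : 0 < r) : P {x | x < -r ∨ 1 + r < x} = 0 := by
  have hle : ∀ n : ℕ, P {x | x < -r ∨ 1 + r < x} ≤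
      P {x | x < -(2 ^ n * r) ∨ 1 + 2 ^ n * r < x} := by
    intro n
    induction n with
    | zero => simp
    | succ k ih =>
      refine ih.trans ((hP.step (2 ^ k * r) (by positivity)).trans (le_of_eq ?_))
      congr 1
      ext x
      simp only [pow_succ, mem_setOf_eq]
      ring_nf
  have hanti : Antitone (fun n : ℕ => {x : ℝ | x < -(2 ^ n * r) ∨ 1 + 2 ^ n * r < x}) := by
    intro m n hmn x hx
    have : (2:ℝ) ^ m * r ≤ 2 ^ n * r := by
      gcongr
      norm_num
    rcases hx with hx | hx
    · left; linarith
    · right; linarith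
  have ht := tendsto_measure_iInter_atTop (μ := P)
    (s := fun n : ℕ => {x : ℝ | x < -(2 ^ n * r) ∨ 1 + 2 ^ n * r < x})
    (fun n => (measurableSet_Iio.union measurableSet_Ioi).nullMeasurableSet) hanti
    ⟨0, measure_ne_top _ _⟩
  have he : (⋂ n : ℕ, {x : ℝ | x < -(2 ^ n * r) ∨ 1 + 2 ^ n * r < x}) = ∅ := by
    ext x
    simp only [mem_iInter, mem_setOf_eq, mem_empty_iff_false, iff_false, not_forall, not_or, not_lt]
    obtain ⟨n, hn⟩ := pow_unbounded_of_one_lt (|x| / r) (by norm_num : (1:ℝ) < 2)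
    rw [div_lt_iff₀ hr] at hn
    have h1 := le_abs_self x
    have h2 := neg_abs_le x
    exact ⟨n, by linarith, by linarith⟩
  rw [he, measure_empty] at ht
  exact le_antisymm (ge_of_tendsto' ht hle) (by simp)

lemma SelfSimilar.ae_mem {P : Measure ℝ} [IsProbabilityMeasure P] (hP : SelfSimilar P) :
    ∀ᵐ x ∂P, x ∈ Set.Icc (0:ℝ) 1 := by
  have h : ∀ᵐ x ∂P, ∀ n : ℕ, ¬ (x < -(1 / ((n:ℝ) + 1)) ∨ 1 + 1 / ((n:ℝ) + 1) < x) := by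
    rw [ae_all_iff]
    intro n
    have := hP.null (1 / ((n:ℝ) + 1)) (by positivity)
    rw [ae_iff]
    simpa only [not_not] using this
  filter_upwards [h] with x hx
  constructor
  · by_contra hc
    obtain ⟨n, hn⟩ := exists_nat_one_div_lt (show (0:ℝ) < -x by linarith)
    exact hx n (Or.inl (by linarith))
  · by_contra hc
    obtain ⟨n, hn⟩ := exists_nat_one_div_lt (show (0:ℝ) < x - 1 by linarith)
    exact hx n (Or.inr (by linarith))

lemma SelfSimilar.integrable {P : Measure ℝ} [IsProbabilityMeasure P] (hP : SelfSimilar P)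
    {f : ℝ → ℝ} (hf : Continuous f) : Integrable f P := by
  obtain ⟨C, hC⟩ := (isCompact_Icc (a := (0:ℝ)) (b := 1)).exists_bound_of_continuousOn hf.continuousOn
  refine Integrable.of_bound hf.aestronglyMeasurable C ?_
  filter_upwards [hP.ae_mem] with x hx using hC x hx

lemma cont_S1 : Continuous S1 := by unfold S1; fun_prop
lemma cont_S2 : Continuous S2 := by unfold S2; fun_prop

lemma SelfSimilar.integral_eq {P : Measure ℝ} [IsProbabilityMeasure P] (hP : SelfSimilar P)
    {f : ℝ → ℝ} (hf : Continuous f) :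
    ∫ x, f x ∂P = 1 / 4 * ∫ x, f (S1 x) ∂P + 3 / 4 * ∫ x, f (S2 x) ∂P := by
  have i1 : Integrable f (P.map S1) := by
    rw [integrable_map_measure hf.aestronglyMeasurable cont_S1.measurable.aemeasurable]
    exact hP.integrable (hf.comp cont_S1)
  have i2 : Integrable f (P.map S2) := by
    rw [integrable_map_measure hf.aestronglyMeasurable cont_S2.measurable.aemeasurable]
    exact hP.integrable (hf.comp cont_S2)
  have e : ∫ x, f x ∂P = ∫ x, f x ∂((1/4 : ℝ≥0∞) • P.map S1 + (3/4 : ℝ≥0∞) • P.map S2) :=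
    congrArg (fun μ : Measure ℝ => ∫ x, f x ∂μ) hP
  rw [e, integral_add_measure (i1.smul_measure (by finiteness))
    (i2.smul_measure (by finiteness)), integral_smul_measure,
    integral_smul_measure, integral_map cont_S1.measurable.aemeasurable hf.aestronglyMeasurable,
    integral_map cont_S2.measurable.aemeasurable hf.aestronglyMeasurable]
  simp

lemma SelfSimilar.integral_mono {P : Measure ℝ} [IsProbabilityMeasure P] (hP : SelfSimilar P)
    {f g : ℝ → ℝ} (hf : Continuous f) (hg : Continuous g)
    (h : ∀ x, 0 ≤ x → x ≤ 1 → f x ≤ g x) : ∫ x, f x ∂P ≤ ∫ x, g x ∂P := by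
  apply integral_mono_ae (hP.integrable hf) (hP.integrable hg)
  filter_upwards [hP.ae_mem] with x hx using h x hx.1 hx.2

lemma SelfSimilar.integral_poly' {P : Measure ℝ} [IsProbabilityMeasure P] (hP : SelfSimilar P)
    (p q r : ℝ) : ∫ x, (p * x ^ 2 + q * x + r) ∂P = p * ∫ x, x ^ 2 ∂P + q * ∫ x, x ∂P + r := by
  rw [integral_add (hP.integrable (by fun_prop)) (hP.integrable (by fun_prop)),
    integral_add (hP.integrable (by fun_prop)) (hP.integrable (by fun_prop)),
    integral_const_mul, integral_const_mul]
  simp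

lemma SelfSimilar.mean {P : Measure ℝ} [IsProbabilityMeasure P] (hP : SelfSimilar P) :
    ∫ x, x ∂P = 2 / 3 := by
  have h := hP.integral_eq (f := fun x => x) (by fun_prop)
  have e1 := hP.integral_poly' 0 (1/4) 0
  have e2 := hP.integral_poly' 0 (1/2) (1/2)
  have r1 : (fun x => S1 x) = fun x : ℝ => 0 * x ^ 2 + 1/4 * x + 0 := by
    funext x; simp only [S1]; ring
  have r2 : (fun x => S2 x) = fun x : ℝ => 0 * x ^ 2 + 1/2 * x + 1/2 := by
    funext x; simp only [S2]; ring
  rw [r1, r2, e1, e2] at h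
  linarith

lemma SelfSimilar.second {P : Measure ℝ} [IsProbabilityMeasure P] (hP : SelfSimilar P) :
    ∫ x, x ^ 2 ∂P = 28 / 51 := by
  have h := hP.integral_eq (f := fun x => x ^ 2) (by fun_prop)
  have e1 := hP.integral_poly' (1/16) 0 0
  have e2 := hP.integral_poly' (1/4) (1/2) (1/4)
  have r1 : (fun x => S1 x ^ 2) = fun x : ℝ => 1/16 * x ^ 2 + 0 * x + 0 := by
    funext x; simp only [S1]; ring
  have r2 : (fun x => S2 x ^ 2) = fun x : ℝ => 1/4 * x ^ 2 + 1/2 * x + 1/4 := by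
    funext x; simp only [S2]; ring
  rw [r1, r2, e1, e2, hP.mean] at h
  linarith

lemma SelfSimilar.integral_poly {P : Measure ℝ} [IsProbabilityMeasure P] (hP : SelfSimilar P)
    (p q r : ℝ) : ∫ x, (p * x ^ 2 + q * x + r) ∂P = p * (28 / 51) + q * (2 / 3) + r := by
  rw [hP.integral_poly', hP.mean, hP.second]

lemma SelfSimilar.sq {P : Measure ℝ} [IsProbabilityMeasure P] (hP : SelfSimilar P) (a : ℝ) :
    ∫ x, (x - a) ^ 2 ∂P = 16 / 153 + (a - 2 / 3) ^ 2 := by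
  have r : (fun x => (x - a) ^ 2) = fun x : ℝ => 1 * x ^ 2 + (-2 * a) * x + a ^ 2 := by
    funext x; ring
  rw [r, hP.integral_poly]; ring

lemma SelfSimilar.sq1 {P : Measure ℝ} [IsProbabilityMeasure P] (hP : SelfSimilar P) (a : ℝ) :
    ∫ x, (S1 x - a) ^ 2 ∂P = 1 / 153 + (a - 1 / 6) ^ 2 := by
  have r : (fun x => (S1 x - a) ^ 2) = fun x : ℝ => 1/16 * x ^ 2 + (-a/2) * x + a ^ 2 := by
    funext x; simp only [S1]; ring
  rw [r, hP.integral_poly]; ring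

lemma SelfSimilar.sq2 {P : Measure ℝ} [IsProbabilityMeasure P] (hP : SelfSimilar P) (a : ℝ) :
    ∫ x, (S2 x - a) ^ 2 ∂P = 4 / 153 + (a - 5 / 6) ^ 2 := by
  have r : (fun x => (S2 x - a) ^ 2) =
      fun x : ℝ => 1/4 * x ^ 2 + (1/2 - a) * x + (1/2 - a) ^ 2 := by
    funext x; simp only [S2]; ring
  rw [r, hP.integral_poly]; ring

/-- Bound for `E (y - x)₊` in the range `1/4 ≤ y`. -/
lemma SelfSimilar.G_base {P : Measure ℝ} [IsProbabilityMeasure P] (hP : SelfSimilar P) (y : ℝ)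
    (hy : 1 / 4 ≤ y) : ∫ x, max (y - x) 0 ∂P ≤ 3 / 8 * y ^ 2 := by
  rcases le_total 1 y with h1 | h1
  · have : ∫ x, max (y - x) 0 ∂P ≤ ∫ x, (0 * x ^ 2 + (-1) * x + y) ∂P := by
      apply hP.integral_mono (by fun_prop) (by fun_prop)
      intro x h0 hx
      rw [max_eq_left (by linarith)]; linarith
    rw [hP.integral_poly] at this
    nlinarith [sq_nonneg (3 * y - 4)]
  rw [hP.integral_eq (f := fun x => max (y - x) 0) (by fun_prop)]
  have c1 : ∫ x, max (y - S1 x) 0 ∂P ≤ ∫ x, (0 * x ^ 2 + (-1/4) * x + y) ∂P := by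
    apply hP.integral_mono (by have := cont_S1; fun_prop) (by fun_prop)
    intro x h0 hx
    simp only [S1]
    rw [max_eq_left (by linarith)]; linarith
  rw [hP.integral_poly] at c1
  rcases le_total y (1 / 2) with h2 | h2
  · have c2 : ∫ x, max (y - S2 x) 0 ∂P ≤ ∫ x, (0 * x ^ 2 + 0 * x + 0) ∂P := by
      apply hP.integral_mono (by have := cont_S2; fun_prop) (by fun_prop)
      intro x h0 hx
      simp only [S2]
      rw [max_eq_right (by linarith)]; linarith
    rw [hP.integral_poly] at c2
    nlinarith [sq_nonneg (3 * y - 1)]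
  · have c2 : ∫ x, max (y - S2 x) 0 ∂P ≤
        ∫ x, (0 * x ^ 2 + (-(y - 1/2)) * x + (y - 1/2)) ∂P := by
      apply hP.integral_mono (by have := cont_S2; fun_prop) (by fun_prop)
      intro x h0 hx
      simp only [S2]
      apply max_le
      · nlinarith
      · nlinarith
    rw [hP.integral_poly] at c2
    nlinarith [sq_nonneg (3 * y - 2)]

lemma SelfSimilar.G_scale {P : Measure ℝ} [IsProbabilityMeasure P] (hP : SelfSimilar P) (y : ℝ)
    (hy : y ≤ 1 / 2) : ∫ x, max (y - x) 0 ∂P ≤ 1 / 16 * ∫ x, max (4 * y - x) 0 ∂P := by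
  rw [hP.integral_eq (f := fun x => max (y - x) 0) (by fun_prop)]
  have c2 : ∫ x, max (y - S2 x) 0 ∂P ≤ ∫ x, (0 * x ^ 2 + 0 * x + 0) ∂P := by
    apply hP.integral_mono (by have := cont_S2; fun_prop) (by fun_prop)
    intro x h0 hx
    simp only [S2]
    rw [max_eq_right (by linarith)]; linarith
  rw [hP.integral_poly] at c2
  have c1 : ∫ x, max (y - S1 x) 0 ∂P ≤ ∫ x, 1 / 4 * max (4 * y - x) 0 ∂P := by
    apply hP.integral_mono (by have := cont_S1; fun_prop) (by fun_prop)
    intro x h0 hx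
    simp only [S1]
    apply max_le
    · linarith [le_max_left (4 * y - x) 0]
    · linarith [le_max_right (4 * y - x) 0]
  rw [integral_const_mul] at c1
  linarith

lemma SelfSimilar.G_le {P : Measure ℝ} [IsProbabilityMeasure P] (hP : SelfSimilar P) (y : ℝ)
    (hy : 0 < y) : ∫ x, max (y - x) 0 ∂P ≤ 3 / 8 * y ^ 2 := by
  have key : ∀ n : ℕ, ∀ y : ℝ, 1 / 4 ≤ 4 ^ n * y → ∫ x, max (y - x) 0 ∂P ≤ 3 / 8 * y ^ 2 := by
    intro n
    induction n with
    | zero => intro y hy; exact hP.G_base y (by simpa using hy)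
    | succ k ih =>
      intro y hy
      rcases le_total y (1 / 2) with h | h
      · have h1 := ih (4 * y) (by rw [pow_succ] at hy; linarith)
        have h2 := hP.G_scale y h
        nlinarith
      · exact hP.G_base y (by linarith)
  obtain ⟨n, hn⟩ := pow_unbounded_of_one_lt (1 / 4 / y) (by norm_num : (1:ℝ) < 4)
  rw [div_lt_iff₀ hy] at hn
  exact key n y hn.le

lemma distortion_pair (P : Measure ℝ) (a c : ℝ) :
    distortion P {a, c} = ∫ x, min ((x - a) ^ 2) ((x - c) ^ 2) ∂P := by
  unfold distortion
  congr 1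
  funext x
  rw [Finset.coe_pair, image_pair, csInf_pair]

lemma distortion_nonneg (P : Measure ℝ) (α : Finset ℝ) : 0 ≤ distortion P α := by
  apply integral_nonneg
  intro x
  apply Real.sInf_nonneg
  rintro _ ⟨a, _, rfl⟩
  positivity

lemma IsOptimal.bound {P : Measure ℝ} [IsProbabilityMeasure P] (hP : SelfSimilar P)
    {α : Finset ℝ} (h : IsOptimal P 2 α) : distortion P α ≤ 13 / 612 := by
  rw [h.2.2]
  have h1 : qError P 2 ≤ distortion P {1/6, 5/6} := by
    apply csInf_le
    · refine ⟨0, ?_⟩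
      rintro _ ⟨β, _, _, rfl⟩
      exact distortion_nonneg P β
    · exact ⟨_, by simp, Finset.card_le_two, rfl⟩
  refine h1.trans ?_
  have k1 := cont_S1
  have k2 := cont_S2
  rw [distortion_pair, hP.integral_eq (by fun_prop)]
  have c1 : ∫ x, min ((S1 x - 1/6) ^ 2) ((S1 x - 5/6) ^ 2) ∂P ≤ ∫ x, (S1 x - 1/6) ^ 2 ∂P :=
    hP.integral_mono (by fun_prop) (by fun_prop) (fun x _ _ => min_le_left _ _)
  have c2 : ∫ x, min ((S2 x - 1/6) ^ 2) ((S2 x - 5/6) ^ 2) ∂P ≤ ∫ x, (S2 x - 5/6) ^ 2 ∂P :=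
    hP.integral_mono (by fun_prop) (by fun_prop) (fun x _ _ => min_le_right _ _)
  rw [hP.sq1] at c1
  rw [hP.sq2] at c2
  linarith

theorem stmt_9 (P : Measure ℝ) [IsProbabilityMeasure P] (hP : SelfSimilar P)
    (a₁ a₂ : ℝ) (h : a₁ < a₂)
    (hopt : IsOptimal P 2 ({a₁, a₂} : Finset ℝ)) :
    a₁ = 1 / 6 ∧ a₂ = 5 / 6 := by
  have hb := hopt.bound hP
  have k1 := cont_S1
  have k2 := cont_S2
  rw [distortion_pair] at hb
  -- the part of the measure on the left piece goes to `a₁` when the boundary is at least `1/4`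
  have L1 : 1 / 2 ≤ a₁ + a₂ → 1 / 153 + (a₁ - 1 / 6) ^ 2 ≤
      ∫ x, min ((S1 x - a₁) ^ 2) ((S1 x - a₂) ^ 2) ∂P := by
    intro hs
    rw [← hP.sq1]
    apply hP.integral_mono (by fun_prop) (by fun_prop)
    intro x h0 hx
    apply le_min le_rfl
    simp only [S1]
    nlinarith [mul_nonneg (sub_nonneg.2 h.le) (show 0 ≤ a₁ + a₂ - x / 2 by linarith)]
  have L2 : a₁ + a₂ ≤ 1 → 4 / 153 + (a₂ - 5 / 6) ^ 2 ≤
      ∫ x, min ((S2 x - a₁) ^ 2) ((S2 x - a₂) ^ 2) ∂P := by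
    intro hs
    rw [← hP.sq2]
    apply hP.integral_mono (by fun_prop) (by fun_prop)
    intro x h0 hx
    refine le_min ?_ le_rfl
    simp only [S2]
    nlinarith [mul_nonneg (sub_nonneg.2 h.le) (show 0 ≤ x + 1 - (a₁ + a₂) by linarith)]
  have hD := hP.integral_eq (f := fun x => min ((x - a₁) ^ 2) ((x - a₂) ^ 2)) (by fun_prop)
  have nn1 : 0 ≤ ∫ x, min ((S1 x - a₁) ^ 2) ((S1 x - a₂) ^ 2) ∂P :=
    integral_nonneg (fun x => le_min (sq_nonneg _) (sq_nonneg _))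
  rcases lt_or_ge (a₁ + a₂) (1 / 2) with hs | hs
  · exfalso
    have l2 := L2 (by linarith)
    rcases lt_or_ge a₂ (1 / 2) with hc | hc
    · nlinarith
    · have l1 : ∫ x, (S1 x - 0) ^ 2 ∂P ≤
          ∫ x, min ((S1 x - a₁) ^ 2) ((S1 x - a₂) ^ 2) ∂P := by
        apply hP.integral_mono (by fun_prop) (by fun_prop)
        intro x h0 hx
        simp only [S1]
        apply le_min
        · nlinarith
        · nlinarith
      rw [hP.sq1] at l1
      nlinarith [sq_nonneg (a₂ - 5 / 6)]
  have l1 := L1 hs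
  rcases le_or_gt (a₁ + a₂) 1 with ht | ht
  · have l2 := L2 ht
    have e1 : (a₁ - 1 / 6) ^ 2 = 0 := by nlinarith [sq_nonneg (a₁ - 1 / 6), sq_nonneg (a₂ - 5 / 6)]
    have e2 : (a₂ - 5 / 6) ^ 2 = 0 := by nlinarith [sq_nonneg (a₁ - 1 / 6), sq_nonneg (a₂ - 5 / 6)]
    have f1 := pow_eq_zero_iff (two_ne_zero) |>.1 e1
    have f2 := pow_eq_zero_iff (two_ne_zero) |>.1 e2
    constructor <;> linarith
  exfalso
  rcases le_or_gt 2 (a₁ + a₂) with h2 | h2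
  · have l : ∫ x, (x - a₁) ^ 2 ∂P ≤ ∫ x, min ((x - a₁) ^ 2) ((x - a₂) ^ 2) ∂P := by
      apply hP.integral_mono (by fun_prop) (by fun_prop)
      intro x h0 hx
      apply le_min le_rfl
      nlinarith [mul_nonneg (sub_nonneg.2 h.le) (show 0 ≤ a₁ + a₂ - 2 * x by linarith)]
    rw [hP.sq] at l
    nlinarith [sq_nonneg (a₁ - 2 / 3)]
  have hG := hP.G_le (a₁ + a₂ - 1) (by linarith)
  have l2 : ∫ x, ((S2 x - a₂) ^ 2 - (a₂ - a₁) * max (a₁ + a₂ - 1 - x) 0) ∂P ≤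
      ∫ x, min ((S2 x - a₁) ^ 2) ((S2 x - a₂) ^ 2) ∂P := by
    apply hP.integral_mono (by fun_prop) (by fun_prop)
    intro x h0 hx
    have hd : 0 ≤ a₂ - a₁ := by linarith
    have m1 := mul_le_mul_of_nonneg_left (le_max_left (a₁ + a₂ - 1 - x) 0) hd
    have m2 := mul_le_mul_of_nonneg_left (le_max_right (a₁ + a₂ - 1 - x) 0) hd
    apply le_min
    · simp only [S2]
      nlinarith
    · linarith
  rw [integral_sub (hP.integrable (by fun_prop)) (hP.integrable (by fun_prop)),
    integral_const_mul, hP.sq2] at l2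
  have hG' := mul_le_mul_of_nonneg_left hG (show 0 ≤ a₂ - a₁ by linarith)
  obtain ⟨t, htt⟩ : ∃ t, t = (a₁ + a₂ - 1) / 2 := ⟨_, rfl⟩
  obtain ⟨w, hw⟩ : ∃ w, w = a₁ - 1 / 6 - 3 * t / 2 := ⟨_, rfl⟩
  have ea : a₁ = 1 / 6 + 3 * t / 2 + w := by linarith
  have ec : a₂ = 5 / 6 + t / 2 - w := by linarith
  have t0 : 0 < t := by linarith
  have t1 : t < 1 / 2 := by linarith
  have fin : 1 / 4 * (a₁ - 1 / 6) ^ 2 + 3 / 4 * (a₂ - 5 / 6) ^ 2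
      - 3 / 4 * ((a₂ - a₁) * (3 / 8 * (a₁ + a₂ - 1) ^ 2)) ≤ 0 := by linarith
  have id : 1 / 4 * (a₁ - 1 / 6) ^ 2 + 3 / 4 * (a₂ - 5 / 6) ^ 2
      - 3 / 4 * ((a₂ - a₁) * (3 / 8 * (a₁ + a₂ - 1) ^ 2))
      = (w + 9 / 8 * t ^ 2) ^ 2 + t ^ 3 * (9 / 8 - 81 / 64 * t) := by
    rw [ea, ec]; ring
  have pos : 0 < t ^ 3 * (9 / 8 - 81 / 64 * t) := mul_pos (by positivity) (by linarith)
  nlinarith [sq_nonneg (w + 9 / 8 * t ^ 2)]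
end
end

section
/- For every n ≥ 2 and every optimal set α_n of n-means for P, each c ∈ α_n equals a(τ) = S_τ(2/3) for some word τ ∈ {1,2}*; i.e., every optimal quantizer point is the conditional expectation of X on some cylinder set J_τ. -/
open MeasureTheory Set
open scoped ENNReal Classical

noncomputable section

/-! ### The expectation functional -/

/-- Abstract properties of the expectation with respect to `P` on continuous functions. -/
structure EF (E : (ℝ → ℝ) → ℝ) : Prop where
  add : ∀ f g, Continuous f → Continuous g → E (fun x => f x + g x) = E f + E g
  smul : ∀ (c : ℝ) f, E (fun x => c * f x) = c * E f
  one : E (fun _ => 1) = 1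
  mono : ∀ f g, Continuous f → Continuous g → (∀ x, 0 ≤ x → x ≤ 1 → f x ≤ g x) → E f ≤ E g
  self : ∀ f, Continuous f → E f = 1/4 * E (fun x => f (x/4)) + 3/4 * E (fun x => f (x/2+1/2))

lemma supp_step (P : Measure ℝ) [IsProbabilityMeasure P] (hP : SelfSimilar P) (R : ℝ) (hR : 0 ≤ R) :
    P (Icc (-(2*R)) (1+2*R)) ≤ P (Icc (-R) (1+R)) := by
  have m1 : Measurable S1 := by unfold S1; fun_prop
  have m2 : Measurable S2 := by unfold S2; fun_prop
  have h : P (Icc (-R) (1+R)) = (1/4 : ℝ≥0∞) * P (S1 ⁻¹' Icc (-R) (1+R))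
      + (3/4 : ℝ≥0∞) * P (S2 ⁻¹' Icc (-R) (1+R)) := by
    conv_lhs => rw [hP]
    simp only [Measure.add_apply, Measure.smul_apply, smul_eq_mul]
    rw [Measure.map_apply m1 measurableSet_Icc, Measure.map_apply m2 measurableSet_Icc]
  have h1 : Icc (-(2*R)) (1+2*R) ⊆ S1 ⁻¹' Icc (-R) (1+R) := by
    rintro x ⟨ha, hb⟩
    constructor <;> unfold S1 <;> linarith
  have h2 : Icc (-(2*R)) (1+2*R) ⊆ S2 ⁻¹' Icc (-R) (1+R) := by
    rintro x ⟨ha, hb⟩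
    constructor <;> unfold S2 <;> linarith
  rw [h]
  have e : (1/4 : ℝ≥0∞) + 3/4 = 1 := by
    rw [← ENNReal.add_div]
    norm_num
    exact ENNReal.div_self (by norm_num) (by norm_num)
  calc P (Icc (-(2*R)) (1+2*R)) = (1/4 + 3/4) * P (Icc (-(2*R)) (1+2*R)) := by rw [e, one_mul]
    _ = (1/4 : ℝ≥0∞) * P (Icc (-(2*R)) (1+2*R)) + (3/4 : ℝ≥0∞) * P (Icc (-(2*R)) (1+2*R)) := by
        rw [add_mul]
    _ ≤ _ := by gcongr

lemma supp_pow (P : Measure ℝ) [IsProbabilityMeasure P] (hP : SelfSimilar P) (R : ℝ) (hR : 0 ≤ R) (k : ℕ) :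
    P (Icc (-(2^k*R)) (1+2^k*R)) ≤ P (Icc (-R) (1+R)) := by
  induction k with
  | zero => simp
  | succ k ih =>
    refine le_trans ?_ ih
    have := supp_step P hP (2^k*R) (by positivity)
    rw [show (2:ℝ)^(k+1)*R = 2*(2^k*R) by ring]
    exact this

lemma supp_R (P : Measure ℝ) [IsProbabilityMeasure P] (hP : SelfSimilar P) (R : ℝ) (hR : 0 < R) :
    P (Icc (-R) (1+R)) = 1 := by
  refine le_antisymm prob_le_one ?_
  have ht : Filter.Tendsto (fun k : ℕ => P (Icc (-(2^k*R)) (1+2^k*R))) Filter.atTop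
      (nhds (P (⋃ k : ℕ, Icc (-(2^k*R)) (1+2^k*R)))) := by
    apply tendsto_measure_iUnion_atTop
    intro i j hij
    have : (2:ℝ)^i*R ≤ 2^j*R := by gcongr; norm_num
    exact Icc_subset_Icc (by linarith) (by linarith)
  have hu : (⋃ k : ℕ, Icc (-((2:ℝ)^k*R)) (1+2^k*R)) = univ := by
    ext x
    simp only [mem_iUnion, mem_univ, iff_true]
    obtain ⟨k, hk⟩ := pow_unbounded_of_one_lt (|x| / R) (one_lt_two)
    refine ⟨k, ?_⟩
    rw [div_lt_iff₀ hR] at hk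
    constructor <;> [linarith [neg_abs_le x]; linarith [le_abs_self x]]
  rw [hu, measure_univ] at ht
  exact le_of_tendsto' ht (fun k => supp_pow P hP R hR.le k)

lemma supp_ae (P : Measure ℝ) [IsProbabilityMeasure P] (hP : SelfSimilar P) :
    ∀ᵐ x ∂P, x ∈ Icc (0:ℝ) 1 := by
  have h : ∀ k : ℕ, ∀ᵐ x ∂P, x ∈ Icc (-(1/((k:ℝ)+1))) (1+1/((k:ℝ)+1)) := by
    intro k
    refine (mem_ae_iff_prob_eq_one₀ ?_).2 ?_
    rotate_left
    · exact supp_R P hP _ (by positivity)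
    · exact measurableSet_Icc.nullMeasurableSet
  rw [← ae_all_iff] at h
  filter_upwards [h] with x hx
  constructor
  · by_contra hc
    push Not at hc
    obtain ⟨k, hk⟩ := exists_nat_one_div_lt (show 0 < -x by linarith)
    have := (hx k).1
    linarith
  · by_contra hc
    push Not at hc
    obtain ⟨k, hk⟩ := exists_nat_one_div_lt (show 0 < x - 1 by linarith)
    have := (hx k).2
    linarith

lemma integ (P : Measure ℝ) [IsProbabilityMeasure P] (hP : SelfSimilar P) (f : ℝ → ℝ)
    (hf : Continuous f) : Integrable f P := by
  obtain ⟨C, hC⟩ := (isCompact_Icc (a := (0:ℝ)) (b := 1)).exists_bound_of_continuousOn hf.continuousOn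
  refine Integrable.of_bound hf.aestronglyMeasurable C ?_
  filter_upwards [supp_ae P hP] with x hx using hC x hx

lemma ef (P : Measure ℝ) [IsProbabilityMeasure P] (hP : SelfSimilar P) :
    EF (fun f => ∫ x, f x ∂P) where
  add f g hf hg := integral_add (integ P hP f hf) (integ P hP g hg)
  smul c f := integral_const_mul c f
  one := by simp
  mono f g hf hg h := by
    apply integral_mono_ae (integ P hP f hf) (integ P hP g hg)
    filter_upwards [supp_ae P hP] with x hx using h x hx.1 hx.2
  self f hf := by
    have c1 : Continuous S1 := by unfold S1; fun_prop
    have c2 : Continuous S2 := by unfold S2; fun_prop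
    have i := integ P hP f hf
    have i1 : Integrable f (P.map S1) :=
      (integrable_map_measure hf.aestronglyMeasurable c1.aemeasurable).2
        (integ P hP _ (hf.comp c1))
    have i2 : Integrable f (P.map S2) :=
      (integrable_map_measure hf.aestronglyMeasurable c2.aemeasurable).2
        (integ P hP _ (hf.comp c2))
    have : ∫ x, f x ∂P = ∫ x, f x ∂((1/4 : ℝ≥0∞) • P.map S1 + (3/4 : ℝ≥0∞) • P.map S2) := by
      rw [← hP]
    beta_reduce
    rw [this, integral_add_measure, integral_smul_measure, integral_smul_measure,
      integral_map c1.aemeasurable hf.aestronglyMeasurable,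
      integral_map c2.aemeasurable hf.aestronglyMeasurable]
    · simp [S1, S2]
    · exact i1.smul_measure (ENNReal.div_ne_top (by norm_num) (by norm_num))
    · exact i2.smul_measure (ENNReal.div_ne_top (by norm_num) (by norm_num))

section abstractE

variable {E : (ℝ → ℝ) → ℝ}

lemma EF.quad0 (H : EF E) (a b c : ℝ) :
    E (fun x => a + b * x + c * x^2) = a + b * E (fun x => x) + c * E (fun x => x^2) := by
  rw [H.add (fun x => a + b * x) (fun x => c * x^2) (by fun_prop) (by fun_prop),
    H.add (fun _ => a) (fun x => b * x) (by fun_prop) (by fun_prop), H.smul, H.smul]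
  have := H.smul a (fun _ => 1)
  rw [H.one] at this
  simp only [mul_one] at this
  rw [this]

lemma EF.mean (H : EF E) : E (fun x => x) = 2/3 := by
  have h := H.self (fun x => x) continuous_id
  have h1 := H.quad0 0 (1/4) 0
  have h2 := H.quad0 (1/2) (1/2) 0
  have e1 : (fun x : ℝ => x/4) = fun x => 0 + 1/4 * x + 0 * x^2 := by ext; ring
  have e2 : (fun x : ℝ => x/2+1/2) = fun x => 1/2 + 1/2 * x + 0 * x^2 := by ext; ring
  rw [e1, e2, h1, h2] at h
  linarith

lemma EF.mom (H : EF E) : E (fun x => x^2) = 28/51 := by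
  have h := H.self (fun x => x^2) (by fun_prop)
  have h1 := H.quad0 0 0 (1/16)
  have h2 := H.quad0 (1/4) (1/2) (1/4)
  have e1 : (fun x : ℝ => (x/4)^2) = fun x => 0 + 0 * x + 1/16 * x^2 := by ext; ring
  have e2 : (fun x : ℝ => (x/2+1/2)^2) = fun x => 1/4 + 1/2 * x + 1/4 * x^2 := by ext; ring
  rw [e1, e2, h1, h2, H.mean] at h
  linarith

lemma EF.sq (H : EF E) (p q : ℝ) :
    E (fun x => (p + q * x)^2) = (p + 2/3*q)^2 + q^2 * (16/153) := by
  have h := H.quad0 (p^2) (2*p*q) (q^2)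
  rw [H.mean, H.mom] at h
  have e : (fun x : ℝ => (p + q * x)^2) = fun x => p^2 + 2*p*q * x + q^2 * x^2 := by ext; ring
  rw [e, h]; ring

lemma EF.lowsq (H : EF E) (p q : ℝ) (f : ℝ → ℝ) (hf : Continuous f)
    (h : ∀ x, 0 ≤ x → x ≤ 1 → (p + q * x)^2 ≤ f x) :
    (p + 2/3*q)^2 + q^2 * (16/153) ≤ E f := by
  rw [← H.sq]
  exact H.mono _ _ (by fun_prop) hf h

lemma EF.nonneg (H : EF E) (f : ℝ → ℝ) (hf : Continuous f) (h : ∀ x, 0 ≤ f x) : 0 ≤ E f := by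
  have := H.lowsq 0 0 f hf (fun x _ _ => by simpa using h x)
  simpa using this

/-! ### The function `G d = E (d - X)⁺` -/

lemma EF.G_le_lin (H : EF E) (t : ℝ) (h0 : 0 ≤ t) (h1 : t ≤ 1) :
    E (fun x => max (t - x) 0) ≤ t / 3 := by
  have h := H.quad0 t (-t) 0
  rw [H.mean, H.mom] at h
  have : E (fun x => max (t - x) 0) ≤ E (fun x => t + -t * x + 0 * x^2) := by
    apply H.mono _ _ (by fun_prop) (by fun_prop)
    intro x hx hx1
    apply max_le <;> nlinarith
  linarith

lemma EF.G_ge_one (H : EF E) (t : ℝ) (h1 : 1 ≤ t) :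
    E (fun x => max (t - x) 0) ≤ t - 2/3 := by
  have h := H.quad0 t (-1) 0
  rw [H.mean, H.mom] at h
  have : E (fun x => max (t - x) 0) ≤ E (fun x => t + -1 * x + 0 * x^2) := by
    apply H.mono _ _ (by fun_prop) (by fun_prop)
    intro x hx hx1
    apply max_le <;> nlinarith
  linarith

lemma EF.G_self (H : EF E) (d : ℝ) : E (fun x => max (d - x) 0) =
    1/16 * E (fun x => max (4*d - x) 0) + 3/8 * E (fun x => max (2*d-1 - x) 0) := by
  rw [H.self (fun x => max (d - x) 0) (by fun_prop)]
  have e1 : (fun x : ℝ => max (d - x/4) 0) = fun x => 1/4 * max (4*d - x) 0 := by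
    ext x
    rw [mul_max_of_nonneg _ _ (by norm_num : (0:ℝ) ≤ 1/4)]
    congr 1 <;> ring
  have e2 : (fun x : ℝ => max (d - (x/2+1/2)) 0) = fun x => 1/2 * max (2*d-1 - x) 0 := by
    ext x
    rw [mul_max_of_nonneg _ _ (by norm_num : (0:ℝ) ≤ 1/2)]
    congr 1 <;> ring
  rw [e1, e2, H.smul, H.smul]
  ring

lemma EF.G_nonpos (H : EF E) (t : ℝ) (h1 : t ≤ 0) :
    E (fun x => max (t - x) 0) ≤ 0 := by
  have h := H.quad0 0 0 0
  have : E (fun x => max (t - x) 0) ≤ E (fun x => 0 + 0 * x + 0 * x^2) := by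
    apply H.mono _ _ (by fun_prop) (by fun_prop)
    intro x hx hx1
    apply max_le <;> nlinarith
  linarith

lemma EF.G_base (H : EF E) (d : ℝ) (hd : 1/4 ≤ d) :
    E (fun x => max (d - x) 0) ≤ 3/8 * d^2 := by
  rcases le_total 1 d with h | h
  · have := H.G_ge_one d h
    nlinarith [sq_nonneg (3*d-4)]
  have hs := H.G_self d
  have h4 := H.G_ge_one (4*d) (by linarith)
  rcases le_total d (1/2) with h2 | h2
  · have := H.G_nonpos (2*d-1) (by linarith)
    nlinarith [sq_nonneg (3*d-1)]
  · have := H.G_le_lin (2*d-1) (by linarith) (by linarith)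
    nlinarith [sq_nonneg (3*d-2)]

lemma EF.G_le (H : EF E) (d : ℝ) (hd : 0 < d) :
    E (fun x => max (d - x) 0) ≤ 3/8 * d^2 := by
  have key : ∀ k : ℕ, ∀ d : ℝ, 1/4 ≤ 4^k * d → 0 < d → E (fun x => max (d - x) 0) ≤ 3/8 * d^2 := by
    intro k
    induction k with
    | zero => intro d h _; exact H.G_base d (by simpa using h)
    | succ k ih =>
      intro d h hd
      rcases le_total (1/4) d with h' | h'
      · exact H.G_base d h'
      have hs := H.G_self d
      have h1 := ih (4*d) (by rw [pow_succ] at h; linarith) (by linarith)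
      have h2 := H.G_nonpos (2*d-1) (by linarith)
      nlinarith
  obtain ⟨k, hk⟩ := pow_unbounded_of_one_lt (1/d) (show (1:ℝ) < 4 by norm_num)
  rw [div_lt_iff₀ hd] at hk
  exact key k d (by linarith) hd

end abstractE

/-! ### The squared distance to a finite set -/

/-- Squared distance to `α`. -/
def rho (α : Finset ℝ) (x : ℝ) : ℝ := sInf ((fun a => (x - a) ^ 2) '' (α : Set ℝ))

lemma rho_eq (α : Finset ℝ) (h : α.Nonempty) (x : ℝ) :
    rho α x = α.inf' h (fun a => (x - a)^2) := by
  rw [Finset.inf'_eq_csInf_image]; rfl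

lemma rho_cont (α : Finset ℝ) (h : α.Nonempty) : Continuous (rho α) := by
  have : rho α = fun x => α.inf' h (fun a => (x - a)^2) := by
    ext x; exact rho_eq α h x
  rw [this]
  apply Continuous.finset_inf'_apply
  intro i _
  fun_prop

lemma rho_le {α : Finset ℝ} {a : ℝ} (h : a ∈ α) (x : ℝ) : rho α x ≤ (x - a)^2 := by
  rw [rho_eq α ⟨a, h⟩]
  exact Finset.inf'_le _ h

lemma le_rho {α : Finset ℝ} (h : α.Nonempty) {x c : ℝ} (hc : ∀ a ∈ α, c ≤ (x - a)^2) :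
    c ≤ rho α x := by
  rw [rho_eq α h]
  exact Finset.le_inf' _ _ hc

lemma rho_mono {α β : Finset ℝ} (h : α.Nonempty) {x : ℝ}
    (hc : ∀ a ∈ α, ∃ b ∈ β, (x - b)^2 ≤ (x - a)^2) : rho β x ≤ rho α x := by
  apply le_rho h
  intro a ha
  obtain ⟨b, hb, hab⟩ := hc a ha
  exact (rho_le hb x).trans hab

lemma rho_nonneg (α : Finset ℝ) (x : ℝ) : 0 ≤ rho α x := by
  apply Real.sInf_nonneg
  rintro _ ⟨a, _, rfl⟩
  positivity

lemma rho_affine {α : Finset ℝ} (h : α.Nonempty) (u v : ℝ) (x : ℝ) :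
    rho (α.image (fun a => u * a + v)) (u * x + v) = u^2 * rho α x := by
  rcases eq_or_ne u 0 with hu | hu
  · subst hu
    apply le_antisymm
    · obtain ⟨a, ha⟩ := h
      refine (rho_le (Finset.mem_image_of_mem _ ha) _).trans ?_
      simp
    · simpa using rho_nonneg _ _
  apply le_antisymm
  · have : u^2 * rho α x ≥ rho (α.image (fun a => u * a + v)) (u * x + v) := by
      have h2 : (rho (α.image (fun a => u * a + v)) (u * x + v)) / u^2 ≤ rho α x := by
        apply le_rho h
        intro a ha
        rw [div_le_iff₀ (by positivity)]
        refine (rho_le (Finset.mem_image_of_mem _ ha) _).trans ?_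
        apply le_of_eq; ring
      rw [div_le_iff₀ (by positivity)] at h2
      linarith
    exact this
  · apply le_rho (h.image _)
    intro b hb
    obtain ⟨a, ha, rfl⟩ := Finset.mem_image.1 hb
    have := rho_le ha x
    have h3 : u^2 * rho α x ≤ u^2 * (x - a)^2 := by gcongr
    linarith [show (u * x + v - (u * a + v))^2 = u^2 * (x-a)^2 by ring]

section opt

variable {E : (ℝ → ℝ) → ℝ}

/-- Expected squared distance on the image of `[0,1]` under `x ↦ u x + v`. -/
def Ac (E : (ℝ → ℝ) → ℝ) (α : Finset ℝ) (u v : ℝ) : ℝ := E (fun x => rho α (u * x + v))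

lemma Ac_split (H : EF E) {α : Finset ℝ} (h : α.Nonempty) (u v : ℝ) :
    Ac E α u v = 1/4 * Ac E α (u/4) v + 3/4 * Ac E α (u/2) (u/2+v) := by
  unfold Ac
  have hc := rho_cont α h
  rw [H.self (fun x => rho α (u * x + v)) (by fun_prop)]
  congr 3
  · ext x; congr 1; ring
  · ext x; congr 1; ring

lemma Ac_one (α : Finset ℝ) : E (rho α) = Ac E α 1 0 := by
  unfold Ac; simp

lemma Ac_low (H : EF E) {α : Finset ℝ} (h : α.Nonempty) (u v p q : ℝ)
    (hl : ∀ x, 0 ≤ x → x ≤ 1 → (p + q * x)^2 ≤ rho α (u * x + v)) :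
    (p + 2/3*q)^2 + q^2 * (16/153) ≤ Ac E α u v := by
  have hc := rho_cont α h
  exact H.lowsq p q _ (by fun_prop) hl

lemma Ac_nonneg (H : EF E) {α : Finset ℝ} (h : α.Nonempty) (u v : ℝ) : 0 ≤ Ac E α u v := by
  have hc := rho_cont α h
  exact H.nonneg _ (by fun_prop) (fun x => rho_nonneg _ _)

/-- If `β` serves the cylinder better than `α`, compare with the rescaled set. -/
lemma Ac_ge_scaled (H : EF E) {α β : Finset ℝ} (h : α.Nonempty) (hb : β.Nonempty) (u v : ℝ)
    (hu : u ≠ 0)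
    (hl : ∀ x, 0 ≤ x → x ≤ 1 → rho β (u * x + v) ≤ rho α (u * x + v)) :
    u^2 * E (rho (β.image (fun b => u⁻¹ * b + (-(u⁻¹ * v))))) ≤ Ac E α u v := by
  have hc := rho_cont α h
  have hc' := rho_cont _ (hb.image (fun b => u⁻¹ * b + (-(u⁻¹ * v))))
  rw [← H.smul]
  apply H.mono _ _ (by fun_prop) (by fun_prop)
  intro x h0 h1
  refine le_trans (le_of_eq ?_) (hl x h0 h1)
  have := rho_affine hb (u⁻¹) (-(u⁻¹ * v)) (u * x + v)
  rw [show u⁻¹ * (u * x + v) + -(u⁻¹ * v) = x by field_simp; ring] at this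
  rw [this]
  field_simp

/-- Gluing. -/
lemma glue (H : EF E) {β γ : Finset ℝ} (hb : β.Nonempty) (hg : γ.Nonempty) :
    E (rho (β.image (fun a => 1/4 * a + 0) ∪ γ.image (fun a => 1/2 * a + 1/2)))
      ≤ 1/64 * E (rho β) + 3/16 * E (rho γ) := by
  set δ := β.image (fun a => 1/4 * a + 0) ∪ γ.image (fun a => 1/2 * a + 1/2) with hδ
  have hn1 := hb.image (fun a : ℝ => 1/4 * a + 0)
  have hn2 := hg.image (fun a : ℝ => 1/2 * a + 1/2)
  have hn : δ.Nonempty := by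
    rw [hδ]; exact hn1.mono Finset.subset_union_left
  have hc := rho_cont δ hn
  have hcb := rho_cont β hb
  have hcg := rho_cont γ hg
  rw [H.self _ hc]
  have h1 : E (fun x => rho δ (x/4)) ≤ E (fun x => (1/4)^2 * rho β x) := by
    apply H.mono _ _ (by fun_prop) (by fun_prop)
    intro x _ _
    rw [← rho_affine hb (1/4) 0 x, show 1/4 * x + 0 = x/4 by ring]
    apply rho_mono hn1
    intro a ha
    exact ⟨a, Finset.mem_union_left _ ha, le_rfl⟩
  have h2 : E (fun x => rho δ (x/2+1/2)) ≤ E (fun x => (1/2)^2 * rho γ x) := by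
    apply H.mono _ _ (by fun_prop) (by fun_prop)
    intro x _ _
    rw [← rho_affine hg (1/2) (1/2) x, show 1/2 * x + 1/2 = x/2+1/2 by ring]
    apply rho_mono hn2
    intro a ha
    exact ⟨a, Finset.mem_union_right _ ha, le_rfl⟩
  rw [H.smul] at h1 h2
  linarith

/-- There is a set of at most `n` points with error at most `u`. -/
def Reach (E : (ℝ → ℝ) → ℝ) (n : ℕ) (u : ℝ) : Prop :=
  ∃ β : Finset ℝ, β.Nonempty ∧ β.card ≤ n ∧ E (rho β) ≤ u

lemma rho_singleton (a x : ℝ) : rho {a} x = (x - a)^2 := by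
  unfold rho; simp

lemma E_singleton (H : EF E) (a : ℝ) : E (rho {a}) = 16/153 + (a - 2/3)^2 := by
  have := H.sq (-a) 1
  have e : rho {a} = fun x => (-a + 1 * x)^2 := by
    ext x; rw [rho_singleton]; ring
  rw [e, this]; ring

lemma reach_one (H : EF E) : Reach E 1 (16/153) :=
  ⟨{2/3}, by simp, by simp, by rw [E_singleton H]; norm_num⟩

lemma reach_glue (H : EF E) {k l : ℕ} {u v w : ℝ} (h1 : Reach E k u) (h2 : Reach E l v)
    (hw : 1/64 * u + 3/16 * v ≤ w) : Reach E (k + l) w := by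
  obtain ⟨β, hb, hbc, hbe⟩ := h1
  obtain ⟨γ, hg, hgc, hge⟩ := h2
  refine ⟨_, (hb.image _).mono Finset.subset_union_left, ?_,
    (glue H hb hg).trans (by linarith)⟩
  refine (Finset.card_union_le _ _).trans ?_
  exact add_le_add (Finset.card_image_le.trans hbc) (Finset.card_image_le.trans hgc)

lemma reach_two (H : EF E) : Reach E 2 (13/64 * (16/153)) :=
  reach_glue H (reach_one H) (reach_one H) (by norm_num)
lemma reach_three (H : EF E) : Reach E 3 (55/1024 * (16/153)) :=
  reach_glue H (reach_one H) (reach_two H) (by norm_num)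
lemma reach_four (H : EF E) : Reach E 4 (421/16384 * (16/153)) :=
  reach_glue H (reach_one H) (reach_three H) (by norm_num)
lemma reach_five (H : EF E) : Reach E 5 (217/16384 * (16/153)) :=
  reach_glue H (reach_two H) (reach_three H) (by norm_num)

/-- Optimality among sets of no larger cardinality. -/
def Opt (E : (ℝ → ℝ) → ℝ) (α : Finset ℝ) : Prop :=
  α.Nonempty ∧ ∀ β : Finset ℝ, β.Nonempty → β.card ≤ α.card → E (rho α) ≤ E (rho β)

lemma Opt.le {α : Finset ℝ} (h : Opt E α) {n : ℕ} {u : ℝ} (hr : Reach E n u) (hn : n ≤ α.card) :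
    E (rho α) ≤ u := by
  obtain ⟨β, hb, hc, he⟩ := hr
  exact (h.2 β hb (hc.trans hn)).trans he

/-- A point `h` of `α` whose cell straddles the gap. -/
def Bad (α : Finset ℝ) (h : ℝ) : Prop :=
  h ∈ α ∧ (∀ a ∈ α, a < h → a + h < 1/2) ∧ (∀ b ∈ α, h < b → 1 < h + b)

/-- A separation of `α`. -/
def Separ (α A B : Finset ℝ) : Prop :=
  A.Nonempty ∧ B.Nonempty ∧ A ⊆ α ∧ B ⊆ α ∧ A ∪ B = α ∧ A.card + B.card = α.card ∧
  (∀ x, 0 ≤ x → x ≤ 1/4 → rho A x ≤ rho α x) ∧ (∀ x, 1/2 ≤ x → x ≤ 1 → rho B x ≤ rho α x)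

lemma sep_or_bad (α : Finset ℝ) (hn : α.Nonempty) : (∃ A B, Separ α A B) ∨ ∃ h, Bad α h := by
  obtain ⟨h, hh, hmin⟩ := Finset.exists_min_image α (fun a => (a - 3/8)^2) hn
  have hl : ∀ a ∈ α, a < h → a + h ≤ 3/4 := by
    intro a ha hlt
    have := hmin a ha
    nlinarith
  have hr : ∀ b ∈ α, h < b → 3/4 ≤ h + b := by
    intro a ha hlt
    have := hmin a ha
    nlinarith
  by_cases c1 : ∃ a ∈ α, a < h ∧ 1/2 ≤ a + h
  · left
    obtain ⟨a, ha, hah, hs⟩ := c1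
    refine ⟨α.filter (fun x => x < h), α.filter (fun x => ¬ x < h), ⟨a, by simp [ha, hah]⟩,
      ⟨h, by simp [hh]⟩, Finset.filter_subset _ _, Finset.filter_subset _ _,
      Finset.filter_union_filter_not_eq _ _, Finset.card_filter_add_card_filter_not _, ?_, ?_⟩
    · intro x h0 h1
      apply rho_mono hn
      intro b hb
      by_cases hbh : b < h
      · exact ⟨b, by simp [hb, hbh], le_rfl⟩
      · exact ⟨a, by simp [ha, hah], by nlinarith⟩
    · intro x h0 h1
      apply rho_mono hn
      intro b hb
      by_cases hbh : b < h
      · have := hl b hb hbh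
        exact ⟨h, by simp [hh], by nlinarith⟩
      · exact ⟨b, by simp only [Finset.mem_filter]; exact ⟨hb, hbh⟩, le_rfl⟩
  by_cases c2 : ∃ b ∈ α, h < b ∧ h + b ≤ 1
  · left
    obtain ⟨a, ha, hah, hs⟩ := c2
    refine ⟨α.filter (fun x => x ≤ h), α.filter (fun x => ¬ x ≤ h), ⟨h, by simp [hh]⟩,
      ⟨a, by simp [ha, hah]⟩, Finset.filter_subset _ _, Finset.filter_subset _ _,
      Finset.filter_union_filter_not_eq _ _, Finset.card_filter_add_card_filter_not _, ?_, ?_⟩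
    · intro x h0 h1
      apply rho_mono hn
      intro b hb
      by_cases hbh : b ≤ h
      · exact ⟨b, by simp only [Finset.mem_filter]; exact ⟨hb, hbh⟩, le_rfl⟩
      · have := hr b hb (not_le.1 hbh)
        push Not at hbh
        exact ⟨h, by simp [hh], by nlinarith⟩
    · intro x h0 h1
      apply rho_mono hn
      intro b hb
      by_cases hbh : b ≤ h
      · exact ⟨a, by simp [ha, hah], by nlinarith⟩
      · exact ⟨b, by simp only [Finset.mem_filter]; exact ⟨hb, hbh⟩, le_rfl⟩
  right
  push Not at c1 c2
  exact ⟨h, hh, c1, c2⟩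

/-! ### Pairs -/

lemma pair_right (H : EF E) (h b : ℝ) (hb : h < b) (hs : 1 < h + b) :
    13/64 * (16/153) < E (rho {h, b}) := by
  have hn : ({h, b} : Finset ℝ).Nonempty := by simp
  have h1 := Ac_low H hn (1/4) 0 (-h) (1/4) (by
    intro x h0 h1
    apply le_rho hn
    intro a ha
    simp only [Finset.mem_insert, Finset.mem_singleton] at ha
    rcases ha with rfl | rfl
    · apply le_of_eq; ring
    · nlinarith)
  set d := (h + b - 1) with hd
  have hd0 : 0 < d := by rw [hd]; linarith
  have h2 : 1/4 * E (fun x => (-(2*b-1) + 1 * x)^2) - (b-h) * E (fun x => max (d - x) 0)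
      ≤ Ac E {h, b} (1/2) (1/2) := by
    have hc := rho_cont _ hn
    rw [← H.smul (1/4), sub_eq_add_neg, ← neg_mul, ← H.smul, ← H.add _ _ (by fun_prop) (by fun_prop)]
    apply H.mono _ _ (by fun_prop) (by fun_prop)
    intro x h0 h1
    apply le_rho hn
    intro a ha
    simp only [Finset.mem_insert, Finset.mem_singleton] at ha
    have hm1 := le_max_left (d - x) 0
    have hm2 := le_max_right (d - x) 0
    rcases ha with rfl | rfl
    · nlinarith
    · nlinarith
  rw [H.sq] at h2
  have hsplit := Ac_split H hn 1 0
  rw [← Ac_one] at hsplit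
  norm_num at hsplit h1 h2 ⊢
  have hG := H.G_le d hd0
  have hG2 : 1 ≤ d → E (fun x => max (d - x) 0) ≤ d - 2/3 := fun h' => H.G_ge_one d h'
  generalize E (fun x => max (d - x) 0) = G at *
  clear_value d
  have hhb : h = d + 1 - b := by rw [hd]; ring
  have hfin : 0 < (1/16) * (h - 1/6)^2*4 + 3/4 * (b - 5/6)^2 - 3/4 * (b-h) * G := by
    rcases lt_or_ge d (16/9) with hd1 | hd1
    · have h3 : 3/4 * (b-h) * G ≤ 3/4 * (b-h) * (3/8 * d^2) := by
        apply mul_le_mul_of_nonneg_left hG; linarith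
      -- z is the deviation of the left point from its optimal place
      obtain ⟨z, hz⟩ : ∃ z, h = 1/6 + (3/4 * d + z/2) := ⟨2 * (h - 1/6 - 3/4*d), by ring⟩
      have hb' : b = 5/6 + d/4 - z/2 := by linarith
      have key : 0 < (4/3) * z^2 + (3/2) * d^2 * z + (3/4) * d^3 := by
        have : 0 < d^3 * (3/4 - 27/64 * d) := by
          apply mul_pos (by positivity); linarith
        nlinarith [sq_nonneg (z + 9/16 * d^2)]
      have e : (1/16) * (h - 1/6)^2*4 + 3/4 * (b - 5/6)^2 - 3/4 * (b-h) * (3/8 * d^2)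
          = 3/16 * ((4/3) * z^2 + (3/2) * d^2 * z + (3/4) * d^3) := by
        rw [hz, hb']; ring
      linarith
    · have hG2 := hG2 (by linarith)
      have h3 : 3/4 * (b-h) * G ≤ 3/4 * (b-h) * (d - 2/3) := by
        apply mul_le_mul_of_nonneg_left hG2; linarith
      rw [hd] at h3
      nlinarith [sq_nonneg (h - 2/3)]
  nlinarith

lemma pair_mid (H : EF E) (h b : ℝ) (hb : h < b) (hs : h + b ≤ 1) (hs' : 1/2 ≤ h + b) :
    13/64 * (16/153) ≤ E (rho {h, b}) := by
  have hn : ({h, b} : Finset ℝ).Nonempty := by simp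
  have h1 := Ac_low H hn (1/4) 0 (-h) (1/4) (by
    intro x h0 h1
    apply le_rho hn
    intro a ha
    simp only [Finset.mem_insert, Finset.mem_singleton] at ha
    rcases ha with rfl | rfl
    · apply le_of_eq; ring
    · nlinarith)
  have h2 := Ac_low H hn (1/2) (1/2) (1/2-b) (1/2) (by
    intro x h0 h1
    apply le_rho hn
    intro a ha
    simp only [Finset.mem_insert, Finset.mem_singleton] at ha
    rcases ha with rfl | rfl
    · nlinarith
    · apply le_of_eq; ring)
  have hsplit := Ac_split H hn 1 0
  rw [← Ac_one] at hsplit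
  norm_num at hsplit h1 h2 ⊢
  nlinarith [sq_nonneg (-h + 1/6), sq_nonneg (1/2 - b + 1/3)]

lemma pair_left (H : EF E) (a h : ℝ) (hb : a < h) (hs : a + h < 1/2) :
    13/64 * (16/153) < E (rho {a, h}) := by
  have hn : ({a, h} : Finset ℝ).Nonempty := by simp
  have h2 := Ac_low H hn (1/2) (1/2) (1/2-h) (1/2) (by
    intro x h0 h1
    apply le_rho hn
    intro c hc
    simp only [Finset.mem_insert, Finset.mem_singleton] at hc
    rcases hc with rfl | rfl
    · nlinarith
    · apply le_of_eq; ring)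
  have hsplit := Ac_split H hn 1 0
  rw [← Ac_one] at hsplit
  have h1' := Ac_nonneg H hn (1/4) 0
  rcases le_total h (1/2) with hh | hh
  · norm_num at hsplit h1' h2 ⊢
    nlinarith
  have h1 := Ac_low H hn (1/4) 0 0 (1/4) (by
    intro x h0 h1
    apply le_rho hn
    intro c hc
    simp only [Finset.mem_insert, Finset.mem_singleton] at hc
    rcases hc with rfl | rfl
    · nlinarith
    · nlinarith)
  norm_num at hsplit h1 h2 ⊢
  nlinarith [sq_nonneg (1/2 - h + 1/3)]

lemma two_low (H : EF E) {β : Finset ℝ} (hn : β.Nonempty) (hc : β.card ≤ 2) :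
    13/64 * (16/153) ≤ E (rho β) := by
  have hp := hn.card_pos
  have : β.card = 1 ∨ β.card = 2 := by omega
  rcases this with h | h
  · obtain ⟨a, rfl⟩ := Finset.card_eq_one.1 h
    rw [E_singleton H]
    nlinarith [sq_nonneg (a - 2/3)]
  · obtain ⟨x, y, hxy, rfl⟩ := Finset.card_eq_two.1 h
    wlog hlt : x < y generalizing x y
    · rw [Finset.pair_comm]
      exact this y x hxy.symm (by simp) (by rw [Finset.pair_comm]; exact hc)
        (by rw [Finset.pair_comm]; exact hp) (by rw [Finset.pair_comm]; exact h) (lt_of_le_of_ne (not_lt.1 hlt) hxy.symm)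
    rcases lt_or_ge 1 (x + y) with h1 | h1
    · exact (pair_right H x y hlt h1).le
    rcases lt_or_ge (x + y) (1/2) with h2 | h2
    · exact (pair_left H x y hlt h2).le
    · exact pair_mid H x y hlt h1 h2

lemma one_low (H : EF E) {β : Finset ℝ} (hn : β.Nonempty) (hc : β.card ≤ 1) :
    16/153 ≤ E (rho β) := by
  have hp := hn.card_pos
  obtain ⟨a, rfl⟩ := Finset.card_eq_one.1 (show β.card = 1 by omega)
  rw [E_singleton H]
  nlinarith [sq_nonneg (a - 2/3)]

/-! ### Bad configurations -/

lemma bad_right {α : Finset ℝ} {h : ℝ} (hb : Bad α h) (x : ℝ) (h1 : 1/2 ≤ x)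
    (h2 : x ≤ 1 - h) : (1 - h - x)^2 ≤ rho α x := by
  apply le_rho ⟨h, hb.1⟩
  intro a ha
  rcases le_or_gt a h with hah | hah
  · nlinarith
  · have := hb.2.2 a ha hah
    nlinarith

lemma bad_left {α : Finset ℝ} {h : ℝ} (hb : Bad α h) (x : ℝ)
    (h1 : 1/2 - h ≤ x) (h2 : x ≤ 1/4) : (x - (1/2 - h))^2 ≤ rho α x := by
  apply le_rho ⟨h, hb.1⟩
  intro a ha
  rcases lt_or_ge a h with hah | hah
  · have := hb.2.1 a ha hah
    nlinarith
  · nlinarith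

/-- The main estimate on the two cylinders next to the gap. -/
lemma bad_low (H : EF E) {α : Finset ℝ} {h : ℝ} (hb : Bad α h) :
    19/1024 * (16/153) < 1/4 * Ac E α (1/4) 0 + 3/16 * Ac E α (1/8) (1/2) := by
  have hn : α.Nonempty := ⟨h, hb.1⟩
  have n1 := Ac_nonneg H hn (1/4) 0
  have n21 := Ac_nonneg H hn (1/8) (1/2)
  have s1 := Ac_split H hn (1/4) 0
  have s12 := Ac_split H hn (1/8) (1/8)
  have s21 := Ac_split H hn (1/8) (1/2)
  have n11 := Ac_nonneg H hn (1/16) 0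
  have n121 := Ac_nonneg H hn (1/32) (1/8)
  have n212 := Ac_nonneg H hn (1/16) (9/16)
  norm_num at s1 s12 s21
  rcases le_total (1/2) h with c | c
  · have := Ac_low H hn (1/4) 0 0 (1/4) (by
      intro x h0 h1
      have := bad_left hb (1/4 * x + 0) (by linarith) (by linarith)
      refine le_trans ?_ this
      nlinarith)
    norm_num at this ⊢
    linarith
  have hJ21 : h ≤ 3/8 → (5/12 - h)^2 + 1/64 * (16/153) ≤ Ac E α (1/8) (1/2) := by
    intro c
    have := Ac_low H hn (1/8) (1/2) (1/2 - h) (-(1/8)) (by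
      intro x h0 h1
      have := bad_right hb (1/8 * x + 1/2) (by linarith) (by linarith)
      refine le_trans (le_of_eq ?_) this
      ring)
    refine le_trans (le_of_eq ?_) this
    ring
  rcases le_total h (5/16) with c1 | c1
  · have := hJ21 (by linarith)
    nlinarith
  rcases le_total h (3/8) with c2 | c2
  · have h21 := hJ21 c2
    have h122 := Ac_low H hn (1/16) (3/16) (h - 5/16) (1/16) (by
      intro x h0 h1
      have := bad_left hb (1/16 * x + 3/16) (by linarith) (by linarith)
      refine le_trans (le_of_eq ?_) this
      ring)
    norm_num at h122
    nlinarith [sq_nonneg (3/16 * (5/12 - h) - 9/64 * (h - 13/48))]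
  have h12 := Ac_low H hn (1/8) (1/8) (h - 3/8) (1/8) (by
      intro x h0 h1
      have := bad_left hb (1/8 * x + 1/8) (by linarith) (by linarith)
      refine le_trans (le_of_eq ?_) this
      ring)
  norm_num at h12
  rcases le_total h (2/5) with c3 | c3
  · have h211 := Ac_low H hn (1/32) (1/2) (1/2 - h) (-(1/32)) (by
      intro x h0 h1
      have := bad_right hb (1/32 * x + 1/2) (by linarith) (by linarith)
      refine le_trans (le_of_eq ?_) this
      ring)
    norm_num at h211
    nlinarith
  · nlinarith

lemma split_parts (H : EF E) {α : Finset ℝ} (hn : α.Nonempty) :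
    E (rho α) = 1/4 * Ac E α (1/4) 0 + 3/16 * Ac E α (1/8) (1/2)
      + 9/16 * Ac E α (1/4) (3/4) := by
  have s := Ac_split H hn 1 0
  have s2 := Ac_split H hn (1/2) (1/2)
  rw [Ac_one (E := E)]
  norm_num at s s2
  linarith

/-- The cylinder `J₂₂` is served by the points to the right of `h`. -/
lemma bad_J22 (H : EF E) {α : Finset ℝ} {h : ℝ} (hb : Bad α h) (hh : h < 1/2)
    (hR : (α.filter (fun x => h < x)).Nonempty) :
    ∃ β : Finset ℝ, β.Nonempty ∧ β.card ≤ (α.filter (fun x => h < x)).card ∧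
      1/16 * E (rho β) ≤ Ac E α (1/4) (3/4) := by
  have hn : α.Nonempty := ⟨h, hb.1⟩
  set B := (α.filter (fun x => h < x)).image (fun b => min b 1) with hB
  have hBn : B.Nonempty := hR.image _
  refine ⟨_, hBn.image (fun b => (1/4:ℝ)⁻¹ * b + (-((1/4:ℝ)⁻¹ * (3/4)))),
    Finset.card_image_le.trans Finset.card_image_le, ?_⟩
  have := Ac_ge_scaled H hn hBn (1/4) (3/4) (by norm_num) (by
    intro x h0 h1
    apply rho_mono hn
    intro a ha
    rcases le_or_gt a h with hah | hah
    · obtain ⟨b, hb'⟩ := hR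
      refine ⟨min b 1, Finset.mem_image_of_mem _ hb', ?_⟩
      have hlt := (Finset.mem_filter.1 hb').2
      have e1 : min b 1 ≤ 1 := min_le_right _ _
      have e2 : h < min b 1 := lt_min hlt (by linarith)
      nlinarith
    · refine ⟨min a 1, Finset.mem_image_of_mem _ (Finset.mem_filter.2 ⟨ha, hah⟩), ?_⟩
      rcases le_total a 1 with h' | h'
      · rw [min_eq_left h']
      · rw [min_eq_right h']
        nlinarith)
  refine le_trans (le_of_eq ?_) this
  norm_num

lemma bad_not_opt (H : EF E) {α : Finset ℝ} {h : ℝ} (hb : Bad α h) (hc : 2 ≤ α.card)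
    (ho : Opt E α) : False := by
  have hn : α.Nonempty := ⟨h, hb.1⟩
  rcases Nat.lt_or_ge α.card 3 with h3 | h3
  · have h2 := ho.le (reach_two H) hc
    obtain ⟨b, hbα, hne⟩ := Finset.exists_mem_ne (show 1 < α.card by omega) h
    have hsub : ({h, b} : Finset ℝ) ⊆ α := by
      intro x hx
      simp only [Finset.mem_insert, Finset.mem_singleton] at hx
      rcases hx with rfl | rfl
      · exact hb.1
      · exact hbα
    have heq : ({h, b} : Finset ℝ) = α := by
      apply Finset.eq_of_subset_of_card_le hsub
      rw [Finset.card_pair hne.symm]; omega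
    rcases lt_or_gt_of_ne hne with hlt | hlt
    · have := pair_left H b h hlt (hb.2.1 b hbα hlt)
      rw [Finset.pair_comm, heq] at this
      linarith
    · have := pair_right H h b hlt (hb.2.2 b hbα hlt)
      rw [heq] at this
      linarith
  have u3 := ho.le (reach_three H) h3
  have hsp := split_parts H hn
  have hlow := bad_low H hb
  have n1 := Ac_nonneg H hn (1/4) 0
  have n21 := Ac_nonneg H hn (1/8) (1/2)
  have n22 := Ac_nonneg H hn (1/4) (3/4)
  have hh : h < 1/2 := by
    by_contra c
    push Not at c
    have := Ac_low H hn (1/4) 0 0 (1/4) (by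
      intro x h0 h1
      have := bad_left hb (1/4 * x + 0) (by linarith) (by linarith)
      refine le_trans ?_ this
      nlinarith)
    norm_num at this
    linarith
  -- there are points to the right
  have hR : (α.filter (fun x => h < x)).Nonempty := by
    by_contra c
    rw [Finset.not_nonempty_iff_eq_empty, Finset.filter_eq_empty_iff] at c
    have := Ac_low H hn (1/4) (3/4) (1/4) (1/4) (by
      intro x h0 h1
      apply le_rho hn
      intro a ha
      have := not_lt.1 (c ha)
      nlinarith)
    norm_num at this
    linarith
  -- there are points to the left
  have hL : (α.filter (fun x => x < h)).Nonempty := by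
    by_contra c
    rw [Finset.not_nonempty_iff_eq_empty, Finset.filter_eq_empty_iff] at c
    have h1 := Ac_low H hn (1/4) 0 (-h) (1/4) (by
      intro x h0 h1
      apply le_rho hn
      intro a ha
      rcases (not_lt.1 (c ha)).eq_or_lt with e | e
      · rw [← e]; apply le_of_eq; ring
      · have := hb.2.2 a ha e
        nlinarith)
    rcases le_total h (3/8) with c2 | c2
    · have h21 := Ac_low H hn (1/8) (1/2) (1/2 - h) (-(1/8)) (by
        intro x h0 h1
        have := bad_right hb (1/8 * x + 1/2) (by linarith) (by linarith)
        refine le_trans (le_of_eq ?_) this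
        ring)
      norm_num at h1 h21
      nlinarith [sq_nonneg (1/4 * (h - 1/6) - 3/16 * (5/12 - h))]
    · norm_num at h1
      nlinarith
  obtain ⟨β, hβn, hβc, hβ⟩ := bad_J22 H hb hh hR
  have hcard : (α.filter (fun x => h < x)).card + 2 ≤ α.card := by
    have hd : Disjoint (α.filter (fun x => h < x)) (α.filter (fun x => ¬ h < x)) :=
      Finset.disjoint_filter_filter_not _ _ _
    have e := Finset.card_filter_add_card_filter_not (s := α) (fun x => h < x)
    have : 1 < (α.filter (fun x => ¬ h < x)).card := by
      obtain ⟨a, ha⟩ := hL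
      rw [Finset.mem_filter] at ha
      rw [Finset.one_lt_card]
      exact ⟨a, by simp only [Finset.mem_filter]; exact ⟨ha.1, by linarith [ha.2]⟩,
        h, by simp [hb.1], ha.2.ne⟩
    omega
  rcases Nat.lt_or_ge α.card 4 with h4 | h4
  · have := one_low H hβn (by omega)
    linarith
  rcases Nat.lt_or_ge α.card 5 with h5 | h5
  · have := two_low H hβn (by omega)
    have u4 := ho.le (reach_four H) h4
    linarith
  · have u5 := ho.le (reach_five H) h5
    linarith

/-! ### The induction -/

lemma sep_opt (H : EF E) {α A B : Finset ℝ} (ho : Opt E α) (hs : Separ α A B) :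
    Opt E (A.image (fun b => (1/4:ℝ)⁻¹ * b + (-((1/4:ℝ)⁻¹ * 0)))) ∧
    Opt E (B.image (fun b => (1/2:ℝ)⁻¹ * b + (-((1/2:ℝ)⁻¹ * (1/2))))) := by
  obtain ⟨hA, hB, hAs, hBs, hU, hcard, h1, h2⟩ := hs
  have hn := ho.1
  have e1 := Ac_ge_scaled H hn hA (1/4) 0 (by norm_num) (by
    intro x h0 hx
    exact h1 _ (by linarith) (by linarith))
  have e2 := Ac_ge_scaled H hn hB (1/2) (1/2) (by norm_num) (by
    intro x h0 hx
    exact h2 _ (by linarith) (by linarith))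
  set A' := A.image (fun b => (1/4:ℝ)⁻¹ * b + (-((1/4:ℝ)⁻¹ * 0))) with hA'
  set B' := B.image (fun b => (1/2:ℝ)⁻¹ * b + (-((1/2:ℝ)⁻¹ * (1/2)))) with hB'
  have hA'n : A'.Nonempty := hA.image _
  have hB'n : B'.Nonempty := hB.image _
  have cA : A'.card ≤ A.card := Finset.card_image_le
  have cB : B'.card ≤ B.card := Finset.card_image_le
  have hsplit := Ac_split H hn 1 0
  rw [← Ac_one] at hsplit
  norm_num at hsplit e1 e2
  have gl : ∀ β γ : Finset ℝ, β.Nonempty → γ.Nonempty → β.card ≤ A.card → γ.card ≤ B.card →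
      E (rho α) ≤ 1/64 * E (rho β) + 3/16 * E (rho γ) := by
    intro β γ hb hg hbc hgc
    refine le_trans (ho.2 _ ((hb.image _).mono Finset.subset_union_left) ?_) (glue H hb hg)
    refine (Finset.card_union_le _ _).trans ?_
    rw [← hcard]
    exact add_le_add (Finset.card_image_le.trans hbc) (Finset.card_image_le.trans hgc)
  refine ⟨⟨hA'n, ?_⟩, ⟨hB'n, ?_⟩⟩
  · intro β hb hc
    have := gl β B' hb hB'n (hc.trans cA) cB
    linarith
  · intro γ hg hc
    have := gl A' γ hA'n hg cA (hc.trans cB)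
    linarith

lemma main_ind (H : EF E) : ∀ (n : ℕ) (α : Finset ℝ), α.card ≤ n → Opt E α →
    ∀ c ∈ α, ∃ τ : List (Fin 2), c = Sw τ (2 / 3) := by
  intro n
  induction n with
  | zero =>
    intro α hc ho
    have := ho.1.card_pos
    omega
  | succ n ih =>
    intro α hc ho c hcα
    rcases Nat.lt_or_ge α.card 2 with h2 | h2
    · have := ho.1.card_pos
      obtain ⟨a, rfl⟩ := Finset.card_eq_one.1 (show α.card = 1 by omega)
      have u := ho.le (reach_one H) (by simp)
      rw [E_singleton H] at u
      have : (a - 2/3)^2 = 0 := le_antisymm (by linarith) (sq_nonneg _)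
      have := pow_eq_zero_iff (two_ne_zero) |>.1 this
      refine ⟨[], ?_⟩
      simp only [Finset.mem_singleton] at hcα
      simp only [Sw, id]
      linarith
    · rcases sep_or_bad α ho.1 with ⟨A, B, hs⟩ | ⟨h, hb⟩
      · obtain ⟨oA, oB⟩ := sep_opt H ho hs
        obtain ⟨hA, hB, hAs, hBs, hU, hcard, h1, h2⟩ := hs
        have pA := hA.card_pos
        have pB := hB.card_pos
        rw [← hU, Finset.mem_union] at hcα
        rcases hcα with hm | hm
        · obtain ⟨τ, hτ⟩ := ih _ (Finset.card_image_le.trans (by omega)) oA _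
            (Finset.mem_image_of_mem _ hm)
          refine ⟨0 :: τ, ?_⟩
          simp only [Sw, Function.comp, ← hτ, if_true, S1]
          norm_num
        · obtain ⟨τ, hτ⟩ := ih _ (Finset.card_image_le.trans (by omega)) oB _
            (Finset.mem_image_of_mem _ hm)
          refine ⟨1 :: τ, ?_⟩
          simp only [Sw, Function.comp, ← hτ]
          norm_num [S2]
          ring
      · exact (bad_not_opt H hb h2 ho).elim

end opt

theorem stmt_17 (P : Measure ℝ) [IsProbabilityMeasure P] (hP : SelfSimilar P)
    (n : ℕ) (hn : 2 ≤ n) (α : Finset ℝ) (hα : IsOptimal P n α) :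
    ∀ c ∈ α, ∃ τ : List (Fin 2), c = Sw τ (2 / 3) := by
  have H := ef P hP
  obtain ⟨h1, h2, h3⟩ := hα
  refine main_ind H α.card α le_rfl ⟨h1, ?_⟩
  intro β hb hc
  have : distortion P α ≤ distortion P β := by
    rw [h3]
    apply csInf_le
    · refine ⟨0, ?_⟩
      rintro _ ⟨γ, _, _, rfl⟩
      exact integral_nonneg (fun x => rho_nonneg γ x)
    · exact ⟨β, hb, hc.trans h2, rfl⟩
  exact this
end
end
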